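/- Let Δ be a Cohen-Macaulay simplicial forest on vertex set V(Δ) and let R = K[x_v : v ∈ V(Δ)] be a polynomial ring over a field K. Then for each 1 ≤ k ≤ ν(Δ), depth(R/I(Δ)^{[k]}) = |V(Δ)| − ν(Δ) + k − 1. -/

import Mathlib

open MvPolynomial

/-- A simplicial complex on the vertex set `V`, presented by its set of facets
(the maximal faces).  Every facet is nonempty and no facet contains another. -/
structure SimplicialComplexOn (V : Type) [Fintype V] [DecidableEq V] : Type where
  facets : Finset (Finset V)
  nonempty_facet : ∀ F ∈ facets, F.Nonempty
  antichain : ∀ F ∈ facets, ∀ G ∈ facets, F ⊆ G → F = G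

variable {V : Type} [Fintype V] [DecidableEq V]

/-- `F` is a leaf of the collection of facets `S`: either `F` is the only facet, or
there is a facet `G ≠ F` (a joint) with `F ∩ H ⊆ F ∩ G` for every facet `H ≠ F`. -/
def IsLeafOf (S : Finset (Finset V)) (F : Finset V) : Prop :=
  F ∈ S ∧ ((∀ H ∈ S, H = F) ∨
    ∃ G ∈ S, G ≠ F ∧ ∀ H ∈ S, H ≠ F → F ∩ H ⊆ F ∩ G)

/-- The forest property for a facet collection: every nonempty subcollection
(i.e. every nonempty subcomplex) has a leaf. -/
def HasLeafProp (S : Finset (Finset V)) : Prop :=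
  ∀ T ⊆ S, T.Nonempty → ∃ F, IsLeafOf T F

/-- A good leaf: a facet which is a leaf of every subcomplex containing it. -/
def IsGoodLeafOf (S : Finset (Finset V)) (F : Finset V) : Prop :=
  F ∈ S ∧ ∀ T ⊆ S, F ∈ T → IsLeafOf T F

/-- A special leaf: a leaf `F` such that for all facets `H, H' ≠ F`,
`H ∩ H' ≠ ∅` iff `(H ∩ H') \ F ≠ ∅`. -/
def IsSpecialLeafOf (S : Finset (Finset V)) (F : Finset V) : Prop :=
  IsLeafOf S F ∧ ∀ H ∈ S, ∀ H' ∈ S, H ≠ F → H' ≠ F →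
    ((H ∩ H').Nonempty ↔ ((H ∩ H') \ F).Nonempty)

/-- A matching: a subcollection of the facets that is pairwise disjoint. -/
def IsMatchingOf (S : Finset (Finset V)) (M : Finset (Finset V)) : Prop :=
  M ⊆ S ∧ ∀ F ∈ M, ∀ G ∈ M, F ≠ G → F ∩ G = ∅

/-- The matching number: maximum size of a matching. -/
noncomputable def matchingNumberOf (S : Finset (Finset V)) : ℕ :=
  sSup {n | ∃ M : Finset (Finset V), IsMatchingOf S M ∧ M.card = n}

/-- The facet collection `S` is grafted: it decomposes as `Fs ∪ Gs` where
(1) every vertex of a `G ∈ Gs` lies in some `F ∈ Fs`, (2) `Fs` is exactly the set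
of leaves of `S`, (3) `Fs` and `Gs` are disjoint, (4) the members of `Fs` are
pairwise disjoint, and (5) for each `G ∈ Gs`, deleting the facet `G` leaves a
grafted collection. -/
inductive IsGrafted : Finset (Finset V) → Prop where
  | intro (S Fs Gs : Finset (Finset V))
      (hunion : S = Fs ∪ Gs)
      (hdisj : Disjoint Fs Gs)
      (hcover : ∀ G ∈ Gs, ∀ v ∈ G, ∃ F ∈ Fs, v ∈ F)
      (hleaves : ∀ F, IsLeafOf S F ↔ F ∈ Fs)
      (hFdisj : ∀ F ∈ Fs, ∀ F' ∈ Fs, F ≠ F' → F ∩ F' = ∅)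
      (hrec : ∀ G ∈ Gs, IsGrafted (S.erase G)) :
      IsGrafted S

/-- `S` is the (minimal presentation of the) grafting of the collection `Gs`
with the simplices `Fs`. -/
def IsGraftingDecomp (S Fs Gs : Finset (Finset V)) : Prop :=
  S = Fs ∪ Gs ∧ Disjoint Fs Gs ∧
  (∀ G ∈ Gs, ∀ v ∈ G, ∃ F ∈ Fs, v ∈ F) ∧
  (∀ F, IsLeafOf S F ↔ F ∈ Fs) ∧
  (∀ F ∈ Fs, ∀ F' ∈ Fs, F ≠ F' → F ∩ F' = ∅) ∧
  (∀ G ∈ Gs, IsGrafted (S.erase G))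

/-- A Cohen-Macaulay simplicial forest, combinatorially: a grafted simplicial forest. -/
def IsCMForestFacets (S : Finset (Finset V)) : Prop :=
  HasLeafProp S ∧ IsGrafted S

/-- The closed neighborhood `N[F] = {F} ∪ {G ∈ S : G ≠ F, G ∩ F ≠ ∅}`. -/
def closedNbhd (S : Finset (Finset V)) (F : Finset V) : Finset (Finset V) :=
  insert F (S.filter fun G => G ≠ F ∧ (G ∩ F).Nonempty)

/-- The contraction of the facet collection `S` on `A`: the minimal members of
`{F \ A : F ∈ S}`. -/
def contraction (S : Finset (Finset V)) (A : Finset V) : Finset (Finset V) :=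
  (S.image fun F => F \ A).filter fun F' => ∀ G ∈ S, G \ A ⊆ F' → G \ A = F'

variable (K : Type) [Field K]

/-- The square-free monomial `x_S = ∏_{v ∈ S} x_v`. -/
noncomputable def xMon (S : Finset V) : MvPolynomial V K := ∏ v ∈ S, X v

/-- The facet ideal `I(Δ) = ⟨x_F : F a facet⟩`. -/
noncomputable def facetIdealOf (S : Finset (Finset V)) : Ideal (MvPolynomial V K) :=
  Ideal.span { p | ∃ F ∈ S, p = xMon K F }

/-- The `k`-th square-free power of an ideal: the ideal generated by all
square-free monomials lying in `I ^ k`. -/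
noncomputable def sqfreePow (I : Ideal (MvPolynomial V K)) (k : ℕ) :
    Ideal (MvPolynomial V K) :=
  Ideal.span { p | (∃ S : Finset V, p = xMon K S) ∧ p ∈ I ^ k }

/-- The depth of `R/I` with respect to the homogeneous maximal ideal
`m = ⟨x_v : v ∈ V⟩`: the largest length of an `R/I`-regular sequence of
elements of `m`. -/
noncomputable def gradedDepth (I : Ideal (MvPolynomial V K)) : ℕ :=
  sSup {n | ∃ rs : List (MvPolynomial V K), rs.length = n ∧
    (∀ r ∈ rs, r ∈ Ideal.span (Set.range (X : V → MvPolynomial V K))) ∧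
    RingTheory.Sequence.IsRegular (MvPolynomial V K ⧸ I) rs}

/-- `R/I` is Cohen-Macaulay: its depth equals its Krull dimension. -/
def IsCMQuot (I : Ideal (MvPolynomial V K)) : Prop :=
  ((gradedDepth K I : ℕ∞) : WithBot ℕ∞) = ringKrullDim (MvPolynomial V K ⧸ I)

section Statements

variable {V : Type} [Fintype V] [DecidableEq V] (K : Type) [Field K]

/-!
Write `r = ν(Δ)` and `n = |V|`. The quotient `R/I(Δ)^{[k]}` is in fact Cohen-Macaulay of dimension
`d = n - r + k - 1`.

Lower bound: the elementary symmetric polynomials `e_d, …, e_1` form a regular sequence. The leaves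
of `Δ` are disjoint blocks covering all vertices, and the traces of the facets on a block form a
chain. By the forest property there is a block `B` along which matchings can be contracted. Let `F`
be the smallest facet inside `B`, and filter `R/I(Δ)^{[k]}` by the exact sequences
`0 → R/(I : x_v) → R/I → R/(I + x_v) → 0` with `v` running through `F`. The colon by `x_F` deletes
the block and lowers `k` by one, while each quotient by a variable contracts the block and keeps
`k`. Either way the expected dimension stays `d`, so by induction only the quotients
`R/(x_w : w ∈ W)` with `|W| = n - d` remain. There `e_d` is congruent to the product of the other
`d` variables, and dividing by it reduces to the case of `d - 1`.

Upper bound: the length of a regular sequence is at most the Krull dimension, and a prime containing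
`I(Δ)^{[k]}` contains variables from at least `r - k + 1` of the disjoint leaves.
-/

section RegularSequences

open RingTheory.Sequence Pointwise

variable {R : Type*} [CommRing R]

theorem isWeaklyRegular_of_subsingleton {M : Type*} [AddCommGroup M] [Module R M] [Subsingleton M]
    (rs : List R) : IsWeaklyRegular M rs :=
  ⟨fun _ _ => Function.injective_of_subsingleton _⟩

theorem isWeaklyRegular_of_exact {M N P : Type*} [AddCommGroup M] [Module R M] [AddCommGroup N]
    [Module R N] [AddCommGroup P] [Module R P] {f : M →ₗ[R] N} {g : N →ₗ[R] P}
    (hf : Function.Injective f) (hfg : Function.Exact f g) (hg : Function.Surjective g)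
    {rs : List R} (hM : IsWeaklyRegular M rs) (hP : IsWeaklyRegular P rs) :
    IsWeaklyRegular N rs := by
  induction rs generalizing M N P with
  | nil => exact .nil R N
  | cons r rs ih =>
    rw [isWeaklyRegular_cons_iff] at hM hP ⊢
    refine ⟨isSMulRegular_of_range_eq_ker hf hfg.linearMap_ker_eq.symm hM.1 hP.1,
      ih ?_ (QuotSMulTop.map_exact r hfg hg) (QuotSMulTop.map_surjective r hg) hM.2 hP.2⟩
    have hzero : Function.Exact (0 : M →ₗ[R] M) f := fun x => by
      simp [map_eq_zero_iff f hf, eq_comm]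
    have hmap :=
      QuotSMulTop.map_first_exact_on_four_term_exact_of_isSMulRegular_last hzero hfg hP.1
    rw [map_zero] at hmap
    rw [injective_iff_map_eq_zero]
    intro x hx
    obtain ⟨y, rfl⟩ := (hmap x).1 hx
    rfl

theorem isWeaklyRegular_quotient_of_colon {I : Ideal R} (x : R) {rs : List R}
    (hcolon : IsWeaklyRegular (R ⧸ I.colon {x}) rs)
    (hsup : IsWeaklyRegular (R ⧸ (I ⊔ Ideal.span {x})) rs) : IsWeaklyRegular (R ⧸ I) rs := by
  have hcomap : I.colon {x} = Submodule.comap (LinearMap.mulRight R x) I :=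
    Submodule.ext fun _ => Submodule.mem_colon_singleton
  refine isWeaklyRegular_of_exact (f := Submodule.mapQ _ I (LinearMap.mulRight R x) hcomap.le)
    (g := Submodule.factor le_sup_left) ?_ ?_ (Submodule.factor_surjective le_sup_left) hcolon hsup
  · rw [← LinearMap.ker_eq_bot, Submodule.ker_mapQ, ← hcomap, Submodule.mkQ_map_self]
  · rw [LinearMap.exact_iff, Submodule.range_mapQ, Submodule.factor, Submodule.ker_mapQ,
      Submodule.comap_id, Submodule.map_sup, Submodule.mkQ_map_self, bot_sup_eq]
    congr 1
    ext p
    simp [Ideal.mem_span_singleton', LinearMap.mem_range]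

theorem isWeaklyRegular_quotient_cons_iff {I : Ideal R} {r : R} {rs : List R} :
    IsWeaklyRegular (R ⧸ I) (r :: rs) ↔
      (∀ p, r * p ∈ I → p ∈ I) ∧ IsWeaklyRegular (R ⧸ (I ⊔ Ideal.span {r})) rs := by
  have htop : r • (⊤ : Submodule R (R ⧸ I)) = Submodule.map I.mkQ (Ideal.span {r}) := by
    rw [← Submodule.ideal_span_singleton_smul, ← Submodule.range_mkQ, ← Submodule.map_top,
      ← Submodule.map_smul'', smul_eq_mul, Ideal.mul_top]
  let e : QuotSMulTop r (R ⧸ I) ≃ₗ[R] R ⧸ (I ⊔ Ideal.span {r}) :=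
    Submodule.quotEquivOfEq _ _ htop ≪≫ₗ Submodule.quotientQuotientEquivQuotientSup I _
  rw [isWeaklyRegular_cons_iff, isSMulRegular_quotient_iff_mem_of_smul_mem,
    e.isWeaklyRegular_congr]
  rfl

theorem isWeaklyRegular_quotient_cons_congr {I : Ideal R} {r s : R} {rs : List R}
    (h : r - s ∈ I) :
    IsWeaklyRegular (R ⧸ I) (r :: rs) ↔ IsWeaklyRegular (R ⧸ I) (s :: rs) := by
  have hmul (p : R) : r * p ∈ I ↔ s * p ∈ I := by
    rw [← I.sub_mem_iff_left (I.mul_mem_right p h), sub_mul, sub_sub_cancel]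
  have hsup : I ⊔ Ideal.span {r} = I ⊔ Ideal.span {s} := by
    have hmk : Ideal.Quotient.mk I r = Ideal.Quotient.mk I s := Ideal.Quotient.eq.2 h
    rw [← Ideal.comap_map_quotientMk, ← Ideal.comap_map_quotientMk, Ideal.map_span, Ideal.map_span,
      Set.image_singleton, Set.image_singleton, hmk]
  rw [isWeaklyRegular_quotient_cons_iff, isWeaklyRegular_quotient_cons_iff, hsup]
  simp only [hmul]

theorem length_le_supportDim_of_isRegular [IsNoetherianRing R] {M : Type*} [AddCommGroup M]
    [Module R M] [Module.Finite R M] {rs : List R} (h : IsRegular M rs) :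
    (rs.length : WithBot ℕ∞) ≤ Module.supportDim R M := by
  induction rs generalizing M with
  | nil =>
    have := h.nontrivial
    have : Nonempty (Module.support R M) := Module.nonempty_support_of_nontrivial.to_subtype
    exact Order.krullDim_nonneg
  | cons r rs ih =>
    rw [isRegular_cons_iff] at h
    calc ((r :: rs).length : WithBot ℕ∞) = rs.length + 1 := by simp
      _ ≤ Module.supportDim R (QuotSMulTop r M) + 1 := by gcongr; exact ih h.2
      _ ≤ Module.supportDim R M :=
        Module.supportDim_quotSMulTop_succ_le_of_notMem_minimalPrimes
          fun _ => h.1.notMem_of_mem_minimalPrimes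

theorem isRegular_quotient_of_le {I J : Ideal R} {rs : List R}
    (h : IsWeaklyRegular (R ⧸ I) rs) (hJ : J ≠ ⊤) (hI : I ≤ J) (hrs : ∀ r ∈ rs, r ∈ J) :
    IsRegular (R ⧸ I) rs := by
  refine ⟨h, fun htop => hJ ?_⟩
  have hle : (Ideal.ofList rs • ⊤ : Submodule R (R ⧸ I)) ≤ Submodule.map I.mkQ J := by
    refine Submodule.smul_le.2 fun r hr p _ => ?_
    obtain ⟨p, rfl⟩ := I.mkQ_surjective p
    exact ⟨r * p, J.mul_mem_right p (Ideal.span_le.2 hrs hr), rfl⟩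
  rw [← htop, top_le_iff, Submodule.map_mkQ_eq_top, sup_eq_right.2 hI] at hle
  exact hle

theorem ringKrullDim_quotient_le_of_forall_isPrime {I : Ideal R} {n : WithBot ℕ∞}
    (h : ∀ p : Ideal R, p.IsPrime → I ≤ p → ringKrullDim (R ⧸ p) ≤ n) :
    ringKrullDim (R ⧸ I) ≤ n := by
  rw [ringKrullDim_quotient]
  refine iSup_le fun s => le_trans ?_ (h s.head.1.asIdeal s.head.1.isPrime s.head.2)
  rw [ringKrullDim_quotient]
  exact Order.LTSeries.length_le_krullDim
    (⟨s.length, fun i => ⟨(s i).1, s.head_le i⟩, s.step⟩ :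
      LTSeries (PrimeSpectrum.zeroLocus (s.head.1.asIdeal : Set R)))

end RegularSequences

section SqfreeIdeal

open RingTheory.Sequence

variable {σ : Type*} {R : Type*} [CommRing R]

theorem prod_X_eq_monomial (S : Finset σ) :
    ∏ v ∈ S, X v = monomial (∑ v ∈ S, Finsupp.single v 1) (1 : R) :=
  (monomial_sum_one S _).symm

theorem sum_single_one_le_iff {S : Finset σ} {m : σ →₀ ℕ} :
    ∑ v ∈ S, Finsupp.single v 1 ≤ m ↔ S ⊆ m.support := by
  classical
  simp only [Finsupp.le_def, Finsupp.finsetSum_apply, Finsupp.single_apply, Finset.sum_ite_eq',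
    Finset.subset_iff, Finsupp.mem_support_iff, ← Nat.one_le_iff_ne_zero]
  refine forall_congr' fun v => ?_
  split_ifs with hv <;> simp [hv]

theorem support_add_sum_single_one [DecidableEq σ] (S : Finset σ) (m : σ →₀ ℕ) :
    (m + ∑ v ∈ S, Finsupp.single v 1).support = m.support ∪ S := by
  ext v
  simp [Finsupp.single_apply, or_comm, imp_iff_not_or]

variable (R) in
/-- The squarefree monomial ideal generated by the monomials `∏ v ∈ S, X v` with `S ∈ P`. Up-closed
families `P` are in bijection with squarefree monomial ideals. -/
noncomputable def sqfreeIdeal (P : Set (Finset σ)) : Ideal (MvPolynomial σ R) :=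
  Ideal.span ((fun S => ∏ v ∈ S, X v) '' P)

theorem mem_sqfreeIdeal_iff {P : Set (Finset σ)} (hP : IsUpperSet P) {p : MvPolynomial σ R} :
    p ∈ sqfreeIdeal R P ↔ ∀ m ∈ p.support, m.support ∈ P := by
  simp only [sqfreeIdeal, prod_X_eq_monomial]
  rw [← Set.image_image (fun m => monomial m (1 : R)), mem_ideal_span_monomial_image]
  refine forall₂_congr fun m _ => ?_
  simp only [Set.exists_mem_image, sum_single_one_le_iff]
  exact ⟨fun ⟨S, hS, hSm⟩ => hP hSm hS, fun h => ⟨_, h, subset_rfl⟩⟩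

theorem sqfreeIdeal_eq_top {P : Set (Finset σ)} (h : ∅ ∈ P) : sqfreeIdeal R P = ⊤ :=
  (Ideal.eq_top_iff_one _).2 (Ideal.subset_span ⟨∅, h, Finset.prod_empty⟩)

theorem sqfreeIdeal_le_idealOfVars {P : Set (Finset σ)} (h : ∅ ∉ P) :
    sqfreeIdeal R P ≤ idealOfVars σ R := by
  refine Ideal.span_le.2 ?_
  rintro _ ⟨S, hS, rfl⟩
  obtain ⟨v, hv⟩ : S.Nonempty := Finset.nonempty_iff_ne_empty.2 fun hempty => h (hempty ▸ hS)
  exact Ideal.mem_of_dvd _ (Finset.dvd_prod_of_mem _ hv) (Ideal.subset_span ⟨v, rfl⟩)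

variable (σ R) in
theorem idealOfVars_ne_top [Nontrivial R] : idealOfVars σ R ≠ ⊤ := by
  rw [Ideal.ne_top_iff_one, ← pow_one (idealOfVars σ R), ← C_1, C_mem_pow_idealOfVars_iff]
  simp

theorem colon_sqfreeIdeal_prod_X [DecidableEq σ] {P : Set (Finset σ)} (hP : IsUpperSet P)
    (U : Finset σ) :
    (sqfreeIdeal R P).colon {∏ v ∈ U, X v} = sqfreeIdeal R {T | T ∪ U ∈ P} := by
  have hPU : IsUpperSet {T | T ∪ U ∈ P} := fun S T h => hP (Finset.union_subset_union_left h)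
  ext p
  have hsupp : (p * monomial (∑ v ∈ U, Finsupp.single v 1) 1).support =
      p.support.map (addRightEmbedding (∑ v ∈ U, Finsupp.single v 1)) :=
    AddMonoidAlgebra.support_coeff_mul_single p _ (by simp) _
  rw [Submodule.mem_colon_singleton, smul_eq_mul, mem_sqfreeIdeal_iff hP, mem_sqfreeIdeal_iff hPU,
    prod_X_eq_monomial, hsupp]
  simp only [Finset.mem_map, addRightEmbedding_apply, forall_exists_index, and_imp,
    forall_apply_eq_imp_iff₂, support_add_sum_single_one, Set.mem_ofPred_eq]

theorem sqfreeIdeal_sup_span_prod_X (P : Set (Finset σ)) (U : Finset σ) :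
    sqfreeIdeal R P ⊔ Ideal.span {∏ v ∈ U, X v} = sqfreeIdeal R (P ∪ Set.Ici U) := by
  have hU : Ideal.span {∏ v ∈ U, X v} = sqfreeIdeal R (Set.Ici U) := by
    refine le_antisymm (Ideal.span_mono (Set.singleton_subset_iff.2 ⟨U, Set.self_mem_Ici, rfl⟩))
      (Ideal.span_le.2 ?_)
    rintro _ ⟨S, hS, rfl⟩
    exact Ideal.mem_span_singleton.2 (Finset.prod_dvd_prod_of_subset _ _ _ hS)
  rw [hU, sqfreeIdeal, sqfreeIdeal, sqfreeIdeal, Set.image_union, Ideal.span_union]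

theorem isWeaklyRegular_sqfreeIdeal_of_filtration [DecidableEq σ] {P : Set (Finset σ)}
    (hP : IsUpperSet P) (F : Finset σ) {rs : List (MvPolynomial σ R)}
    (hstep : ∀ u ⊂ F, ∃ v ∈ F \ u, IsWeaklyRegular
      (MvPolynomial σ R ⧸ sqfreeIdeal R ({T | T ∪ u ∈ P} ∪ {T | v ∈ T})) rs)
    (hF : IsWeaklyRegular (MvPolynomial σ R ⧸ sqfreeIdeal R {T | T ∪ F ∈ P}) rs) :
    IsWeaklyRegular (MvPolynomial σ R ⧸ sqfreeIdeal R P) rs := by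
  suffices h : ∀ n, ∀ u ⊆ F, (F \ u).card = n →
      IsWeaklyRegular (MvPolynomial σ R ⧸ sqfreeIdeal R {T | T ∪ u ∈ P}) rs by
    have hempty : {T | T ∪ ∅ ∈ P} = P := by simp only [Finset.union_empty, Set.ofPred_mem_eq]
    rw [← hempty]
    exact h _ ∅ (Finset.empty_subset F) rfl
  intro n
  induction n with
  | zero =>
    intro u hu hn
    rwa [hu.antisymm (Finset.sdiff_eq_empty_iff_subset.1 (Finset.card_eq_zero.1 hn))]
  | succ n ih =>
    intro u hu hn
    have huF : u ⊂ F := hu.ssubset_of_ne fun h => by simp [h] at hn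
    obtain ⟨v, hv, hreg⟩ := hstep u huF
    have hvF : v ∈ F := (Finset.mem_sdiff.1 hv).1
    have hPu : IsUpperSet {T | T ∪ u ∈ P} := fun S T h => hP (Finset.union_subset_union_left h)
    refine isWeaklyRegular_quotient_of_colon (∏ w ∈ {v}, X w) ?_ ?_
    · have hcolon : {T | T ∪ {v} ∈ {T | T ∪ u ∈ P}} = {T | T ∪ insert v u ∈ P} := by
        simp only [Set.mem_ofPred_eq, Finset.union_assoc, Finset.singleton_union]
      rw [colon_sqfreeIdeal_prod_X hPu, hcolon]
      refine ih (insert v u) (Finset.insert_subset hvF hu) ?_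
      rw [Finset.sdiff_insert, Finset.card_erase_of_mem hv, hn, Nat.add_sub_cancel]
    · have hsup : Set.Ici {v} = {T : Finset σ | v ∈ T} :=
        Set.ext fun _ => Finset.singleton_subset_iff
      rwa [sqfreeIdeal_sup_span_prod_X, hsup]

end SqfreeIdeal

section Meeting

open RingTheory.Sequence

variable {σ : Type*} {R : Type*} [CommRing R]

/-- The up-closed family of sets meeting `W`, so that `sqfreeIdeal R (meeting W)` is the prime
generated by the variables indexed by `W`. -/
def meeting (W : Finset σ) : Set (Finset σ) := {T | ¬ Disjoint W T}

theorem isUpperSet_meeting (W : Finset σ) : IsUpperSet (meeting W) :=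
  fun _ _ hST hS hT => hS (hT.mono_right hST)

theorem mem_sqfreeIdeal_meeting_of_prod_X_mul_mem {W U : Finset σ} (hWU : Disjoint W U)
    {p : MvPolynomial σ R} (hp : (∏ v ∈ U, X v) * p ∈ sqfreeIdeal R (meeting W)) :
    p ∈ sqfreeIdeal R (meeting W) := by
  classical
  rw [mul_comm, ← smul_eq_mul, ← Submodule.mem_colon_singleton,
    colon_sqfreeIdeal_prod_X (isUpperSet_meeting W)] at hp
  simpa [meeting, hWU] using hp

variable [DecidableEq σ]

theorem isWeaklyRegular_sqfreeIdeal_meeting_union_Ici {W U : Finset σ} (hWU : Disjoint W U)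
    {rs : List (MvPolynomial σ R)} (h : ∀ v ∈ U,
      IsWeaklyRegular (MvPolynomial σ R ⧸ sqfreeIdeal R (meeting (insert v W))) rs) :
    IsWeaklyRegular (MvPolynomial σ R ⧸ sqfreeIdeal R (meeting W ∪ Set.Ici U)) rs := by
  refine isWeaklyRegular_sqfreeIdeal_of_filtration
    ((isUpperSet_meeting W).union (isUpperSet_Ici U)) U (fun u hu => ?_) ?_
  · obtain ⟨v, hvU, hvu⟩ := Finset.exists_of_ssubset hu
    refine ⟨v, Finset.mem_sdiff.2 ⟨hvU, hvu⟩, ?_⟩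
    have heq : {T | T ∪ u ∈ meeting W ∪ Set.Ici U} ∪ {T | v ∈ T} = meeting (insert v W) := by
      ext T
      have hWu : Disjoint W u := hWU.mono_right hu.subset
      simp only [meeting, Set.mem_union, Set.mem_ofPred_eq, Finset.disjoint_union_right, hWu,
        and_true, Set.mem_Ici, Finset.disjoint_insert_left, not_and_or, not_not]
      have : U ≤ T ∪ u → v ∈ T := fun h => (Finset.mem_union.1 (h hvU)).resolve_right hvu
      tauto
    rw [heq]
    exact h v hvU
  · rw [sqfreeIdeal_eq_top (Or.inr (by simp))]
    exact isWeaklyRegular_of_subsingleton rs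

end Meeting

section ElementarySymmetric

open RingTheory.Sequence

variable {σ : Type*} {R : Type*} [CommRing R] [Fintype σ]

variable (σ R) in
/-- The elementary symmetric polynomials `e_d, …, e_1`. -/
noncomputable def esymmSeq : ℕ → List (MvPolynomial σ R)
  | 0 => []
  | d + 1 => esymm σ R (d + 1) :: esymmSeq d

theorem length_esymmSeq (d : ℕ) : (esymmSeq σ R d).length = d := by
  induction d with
  | zero => rfl
  | succ d ih => rw [esymmSeq, List.length_cons, ih]

theorem mem_idealOfVars_of_mem_esymmSeq {d : ℕ} :
    ∀ p ∈ esymmSeq σ R d, p ∈ idealOfVars σ R := by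
  induction d with
  | zero => exact fun p hp => absurd hp List.not_mem_nil
  | succ d ih =>
    refine List.forall_mem_cons.2 ⟨Ideal.sum_mem _ fun S hS => ?_, ih⟩
    obtain ⟨v, hv⟩ : S.Nonempty := Finset.card_pos.1 (by
      rw [(Finset.mem_powersetCard.1 hS).2]; exact Nat.succ_pos d)
    exact Ideal.mem_of_dvd _ (Finset.dvd_prod_of_mem _ hv) (Ideal.subset_span ⟨v, rfl⟩)

variable [DecidableEq σ]

theorem esymm_sub_prod_X_compl_mem (W : Finset σ) :
    esymm σ R Wᶜ.card - ∏ v ∈ Wᶜ, X v ∈ sqfreeIdeal R (meeting W) := by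
  have hW : Wᶜ ∈ Finset.powersetCard Wᶜ.card Finset.univ :=
    Finset.mem_powersetCard.2 ⟨Finset.subset_univ _, rfl⟩
  rw [esymm, ← Finset.sum_erase_eq_sub hW]
  refine Ideal.sum_mem _ fun S hS => Ideal.subset_span ⟨S, fun hdisj => ?_, rfl⟩
  obtain ⟨hne, hcard⟩ := Finset.mem_erase.1 hS
  have hsub : S ⊆ Wᶜ := Finset.subset_compl_iff_disjoint_left.2 hdisj
  exact hne (Finset.eq_of_subset_of_card_le hsub (Finset.mem_powersetCard.1 hcard).2.ge)

theorem isWeaklyRegular_esymmSeq_meeting (W : Finset σ) :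
    IsWeaklyRegular (MvPolynomial σ R ⧸ sqfreeIdeal R (meeting W)) (esymmSeq σ R Wᶜ.card) := by
  induction hd : Wᶜ.card generalizing W with
  | zero => exact .nil _ _
  | succ d ih =>
    have hWW : Disjoint W Wᶜ := disjoint_compl_right
    rw [esymmSeq, ← hd, isWeaklyRegular_quotient_cons_congr (esymm_sub_prod_X_compl_mem W),
      isWeaklyRegular_quotient_cons_iff, sqfreeIdeal_sup_span_prod_X]
    refine ⟨fun p => mem_sqfreeIdeal_meeting_of_prod_X_mul_mem hWW,
      isWeaklyRegular_sqfreeIdeal_meeting_union_Ici hWW fun v hv => ih _ ?_⟩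
    rw [Finset.compl_insert, Finset.card_erase_of_mem hv, hd, Nat.add_sub_cancel]

end ElementarySymmetric

section KrullDimension

variable {σ : Type*} {R : Type*} [CommRing R] [IsNoetherianRing R]

theorem ringKrullDim_quotient_span_X_le [Finite σ] (W : Set σ) :
    ringKrullDim (MvPolynomial σ R ⧸ Ideal.span (X '' W : Set (MvPolynomial σ R))) ≤
      ringKrullDim R + Nat.card ↥Wᶜ := by
  set I : Ideal (MvPolynomial σ R) := Ideal.span (X '' W)
  have hinj : Function.Injective ((↑) : ↥Wᶜ → σ) := Subtype.val_injective
  have hkill : ((Ideal.Quotient.mkₐ R I).comp (rename (↑))).comp (killCompl hinj) =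
      Ideal.Quotient.mkₐ R I := by
    ext v
    by_cases hv : v ∈ W
    · have hX : X v ∈ I := Ideal.subset_span ⟨v, hv, rfl⟩
      simp [killCompl, hv, Ideal.Quotient.eq_zero_iff_mem.2 hX]
    · have hX := killCompl_rename_app (R := R) hinj (X ⟨v, hv⟩)
      rw [rename_X] at hX
      simp [hX]
  have hsurj : Function.Surjective ((Ideal.Quotient.mkₐ R I).comp (rename ((↑) : ↥Wᶜ → σ))) :=
    Function.Surjective.of_comp (g := killCompl hinj) (by
      rw [← AlgHom.coe_comp, hkill]; exact Ideal.Quotient.mkₐ_surjective R I)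
  refine (ringKrullDim_le_of_surjective _ hsurj).trans_eq ?_
  exact MvPolynomial.ringKrullDim_of_isNoetherianRing

theorem ringKrullDim_quotient_sqfreeIdeal_le [Fintype σ] [DecidableEq σ]
    {P : Set (Finset σ)} {n : ℕ} (h : ∀ W : Finset σ, P ⊆ meeting W → Wᶜ.card ≤ n) :
    ringKrullDim (MvPolynomial σ R ⧸ sqfreeIdeal R P) ≤ ringKrullDim R + n := by
  classical
  refine ringKrullDim_quotient_le_of_forall_isPrime fun p hp hPp => ?_
  let W : Finset σ := {v | X v ∈ p}
  have hWp : Ideal.span (X '' (W : Set σ)) ≤ p := by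
    rw [Ideal.span_le]
    rintro _ ⟨v, hv, rfl⟩
    exact (Finset.mem_filter.1 hv).2
  have hW : P ⊆ meeting W := fun S hS hdisj => by
    obtain ⟨v, hvS, hvp⟩ := hp.prod_mem_iff.1 (hPp (Ideal.subset_span ⟨S, hS, rfl⟩))
    exact Finset.disjoint_left.1 hdisj (Finset.mem_filter.2 ⟨Finset.mem_univ v, hvp⟩) hvS
  calc ringKrullDim (MvPolynomial σ R ⧸ p)
      ≤ ringKrullDim (MvPolynomial σ R ⧸
          Ideal.span (X '' (W : Set σ) : Set (MvPolynomial σ R))) :=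
        ringKrullDim_le_of_surjective (Ideal.Quotient.factor hWp)
          (Ideal.Quotient.factor_surjective hWp)
    _ ≤ ringKrullDim R + Nat.card ↥(W : Set σ)ᶜ := ringKrullDim_quotient_span_X_le _
    _ = ringKrullDim R + Wᶜ.card := by
        rw [← Finset.coe_compl, Nat.card_coe_set_eq, Set.ncard_coe_finset]
    _ ≤ ringKrullDim R + n := by gcongr; exact h W hW

end KrullDimension

section Forest

variable {α : Type} [DecidableEq α]

theorem isLeafOf_empty {S : Finset (Finset α)} (h : ∅ ∈ S) : IsLeafOf S ∅ := by
  refine ⟨h, or_iff_not_imp_left.2 fun hS => ?_⟩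
  push Not at hS
  obtain ⟨G, hG, hne⟩ := hS
  exact ⟨G, hG, hne.ne_empty, fun H _ _ => by simp only [Finset.empty_inter, subset_rfl]⟩

theorem IsLeafOf.exists_joint {S : Finset (Finset α)} {F : Finset α} (h : IsLeafOf S F)
    (hS : S.Nontrivial) : ∃ G ∈ S, G ≠ F ∧ ∀ H ∈ S, H ≠ F → F ∩ H ⊆ G := by
  obtain ⟨-, hall | ⟨G, hG, hGF, hjoint⟩⟩ := h
  · obtain ⟨H, hH, hHF⟩ := hS.exists_ne F
    exact absurd (hall H hH) hHF
  · exact ⟨G, hG, hGF, fun H hH hHF => (hjoint H hH hHF).trans Finset.inter_subset_right⟩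

theorem isLeafOf_of_joint {S : Finset (Finset α)} {F G : Finset α} (hF : F ∈ S) (hG : G ∈ S)
    (hGF : G ≠ F) (h : ∀ H ∈ S, H ≠ F → F ∩ H ⊆ G) : IsLeafOf S F :=
  ⟨hF, .inr ⟨G, hG, hGF, fun H hH hHF =>
    Finset.subset_inter Finset.inter_subset_left (h H hH hHF)⟩⟩

theorem HasLeafProp.mono {S T : Finset (Finset α)} (h : HasLeafProp S) (hTS : T ⊆ S) :
    HasLeafProp T :=
  fun U hU => h U (hU.trans hTS)

theorem HasLeafProp.insert_empty {S : Finset (Finset α)} (h : HasLeafProp S) :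
    HasLeafProp (insert ∅ S) := by
  intro T hT hne
  by_cases hempty : ∅ ∈ T
  · exact ⟨∅, isLeafOf_empty hempty⟩
  · exact h T ((Finset.subset_insert_iff_of_notMem hempty).1 hT) hne

theorem HasLeafProp.image_inter {S : Finset (Finset α)} (h : HasLeafProp S) (U : Finset α) :
    HasLeafProp (S.image (· ∩ U)) := by
  intro T hT hne
  have hsurj : Set.SurjOn (· ∩ U) (S : Set (Finset α)) T := by
    rwa [Set.SurjOn, ← Finset.coe_image, Finset.coe_subset]
  obtain ⟨S', hS', hinj, rfl⟩ := Finset.exists_subset_injOn_image_eq_of_surjOn _ T hsurj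
  obtain ⟨F, hF, hleaf⟩ := h S' (Finset.coe_subset.1 hS') (Finset.image_nonempty.1 hne)
  refine ⟨F ∩ U, Finset.mem_image_of_mem _ hF, ?_⟩
  simp only [Finset.forall_mem_image, Finset.exists_mem_image]
  refine hleaf.imp (fun hall H hH => by rw [hall H hH]) ?_
  rintro ⟨G, hG, hGF, hjoint⟩
  refine ⟨G, hG, hinj.ne hG hF hGF, fun H hH hHF => ?_⟩
  rw [← Finset.inter_inter_distrib_right, ← Finset.inter_inter_distrib_right]
  exact Finset.inter_subset_inter_right (hjoint H hH fun hHF' => hHF (by rw [hHF']))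

theorem IsLeafOf.of_erase {S : Finset (Finset α)} {F G L : Finset α} (hL : IsLeafOf (S.erase F) L)
    (hG : G ∈ S) (hGF : G ≠ F) (hLG : L ≠ G) (hjoint : ∀ H ∈ S, H ≠ F → F ∩ H ⊆ G) :
    IsLeafOf S L := by
  obtain ⟨hLF, hLS⟩ := Finset.mem_erase.1 hL.1
  have hGe : G ∈ S.erase F := Finset.mem_erase.2 ⟨hGF, hG⟩
  obtain ⟨J, hJ, hJL, hjointL⟩ := hL.exists_joint ⟨L, hL.1, G, hGe, hLG⟩
  refine isLeafOf_of_joint hLS (Finset.mem_of_mem_erase hJ) hJL fun H hH hHL => ?_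
  obtain rfl | hHF := eq_or_ne H F
  · have hLH : L ∩ H ⊆ G := by
      rw [Finset.inter_comm]
      exact hjoint L hLS hLF
    exact (Finset.subset_inter Finset.inter_subset_left hLH).trans (hjointL G hGe hLG.symm)
  · exact hjointL H (Finset.mem_erase.2 ⟨hHF, hH⟩) hHL

theorem HasLeafProp.exists_isLeafOf_ne {S : Finset (Finset α)} (h : HasLeafProp S)
    (hS : S.Nontrivial) {M : Finset α} (hM : M ∈ S) : ∃ F, F ≠ M ∧ IsLeafOf S F := by
  induction S using Finset.strongInduction generalizing M with
  | H S ih =>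
    obtain ⟨F, hF⟩ := h S subset_rfl ⟨M, hM⟩
    obtain rfl | hFM := eq_or_ne F M
    · obtain ⟨G, hG, hGF, hjoint⟩ := hF.exists_joint hS
      have hGe : G ∈ S.erase F := Finset.mem_erase.2 ⟨hGF, hG⟩
      by_cases hnontriv : (S.erase F).Nontrivial
      · obtain ⟨L, hLG, hL⟩ := ih _ (Finset.erase_ssubset hM) (h.mono (Finset.erase_subset F S))
          hnontriv hGe
        exact ⟨L, Finset.ne_of_mem_erase hL.1, hL.of_erase hG hGF hLG hjoint⟩
      · refine ⟨G, hGF, isLeafOf_of_joint hG hM hGF.symm fun H hH hHG => ?_⟩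
        obtain rfl | hHF := eq_or_ne H F
        · exact Finset.inter_subset_right
        · exact absurd (Set.not_nontrivial_iff.1 hnontriv (Finset.mem_erase.2 ⟨hHF, hH⟩) hGe) hHG
    · exact ⟨F, hFM, hF⟩

/-- A vertex is a nest point of a set system when the members containing it form a chain. Forests
are built up from nest points, as chordal graphs are from simplicial vertices. -/
def IsNestPoint (S : Finset (Finset α)) (v : α) : Prop :=
  ∀ H ∈ S, ∀ H' ∈ S, v ∈ H → v ∈ H' → H ⊆ H' ∨ H' ⊆ H

theorem HasLeafProp.exists_maximal_inter_subset {S : Finset (Finset α)} (h : HasLeafProp S)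
    {E : Finset α} (hE : E ∈ S) (hS : S.sup id ∉ S) :
    ∃ F ∈ S, ∃ G ∈ S, ¬ F ⊆ G ∧ F ∩ E ⊆ G ∧ ∀ H ∈ S, ¬ H ⊆ F → F ∩ H ⊆ G := by
  classical
  let Smax := S.filter (Maximal (· ∈ S))
  have hsub : Smax ⊆ S := Finset.filter_subset _ _
  have hmax (H) (hH : H ∈ S) : ∃ M ∈ Smax, H ⊆ M := by
    obtain ⟨M, hHM, hM⟩ := S.exists_le_maximal hH
    exact ⟨M, Finset.mem_filter.2 ⟨hM.1, hM⟩, hHM⟩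
  obtain ⟨M, hM, hEM⟩ := hmax E hE
  have hnontriv : Smax.Nontrivial := by
    by_contra hsub'
    rw [Finset.Nontrivial, Set.not_nontrivial_iff] at hsub'
    have hsup : S.sup id = M := by
      refine le_antisymm (Finset.sup_le fun H hH => ?_) (Finset.le_sup (f := id) (hsub hM))
      obtain ⟨M', hM', hHM'⟩ := hmax H hH
      rwa [hsub' hM hM']
    exact hS (hsup ▸ hsub hM)
  obtain ⟨F, hFM, hF⟩ := (h.mono hsub).exists_isLeafOf_ne hnontriv hM
  obtain ⟨G, hG, hGF, hjoint⟩ := hF.exists_joint hnontriv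
  refine ⟨F, hsub hF.1, G, hsub hG, fun hle => hGF ?_, ?_, fun H hH hHF => ?_⟩
  · exact ((Finset.mem_filter.1 hF.1).2.eq_of_le (hsub hG) hle).symm
  · exact (Finset.inter_subset_inter_left hEM).trans (hjoint M hM hFM.symm)
  · obtain ⟨M', hM', hHM'⟩ := hmax H hH
    refine (Finset.inter_subset_inter_left hHM').trans (hjoint M' hM' ?_)
    rintro rfl
    exact hHF hHM'

theorem IsNestPoint.of_image_inter {S : Finset (Finset α)} {F : Finset α} {v : α}
    (h : IsNestPoint (S.image (· ∩ F)) v) (hF : ∀ H ∈ S, v ∈ H → H ⊆ F) : IsNestPoint S v := by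
  intro H hH H' hH' hv hv'
  have heq : H ∩ F = H := Finset.inter_eq_left.2 (hF H hH hv)
  have heq' : H' ∩ F = H' := Finset.inter_eq_left.2 (hF H' hH' hv')
  rw [← heq, ← heq']
  exact h _ (Finset.mem_image_of_mem _ hH) _ (Finset.mem_image_of_mem _ hH') (heq.symm ▸ hv)
    (heq'.symm ▸ hv')

theorem IsNestPoint.of_erase {S : Finset (Finset α)} {F : Finset α} {v : α}
    (h : IsNestPoint (S.erase F) v) (hF : ∀ H ∈ S, H ⊆ F) : IsNestPoint S v := by
  intro H hH H' hH' hv hv'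
  obtain rfl | hHF := eq_or_ne H F
  · exact .inr (hF H' hH')
  obtain rfl | hHF' := eq_or_ne H' F
  · exact .inl (hF H hH)
  exact h H (Finset.mem_erase.2 ⟨hHF, hH⟩) H' (Finset.mem_erase.2 ⟨hHF', hH'⟩) hv hv'

theorem isNestPoint_of_notMem_sup_erase {S : Finset (Finset α)} {F : Finset α} {v : α}
    (h : v ∉ (S.erase F).sup id) : IsNestPoint S v := by
  have heq {H} (hH : H ∈ S) (hv : v ∈ H) : H = F := by
    by_contra hne
    exact h (Finset.mem_sup.2 ⟨H, Finset.mem_erase.2 ⟨hne, hH⟩, hv⟩)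
  exact fun H hH H' hH' hv hv' => .inl (by rw [heq hH hv, heq hH' hv'])

theorem HasLeafProp.exists_isNestPoint_notMem {S : Finset (Finset α)} (h : HasLeafProp S)
    {E : Finset α} (hE : E ∈ S) (hSE : ¬ S.sup id ⊆ E) :
    ∃ v ∈ S.sup id, v ∉ E ∧ IsNestPoint S v := by
  induction hn : (S.sup id).card + S.card using Nat.strong_induction_on generalizing S E with
  | h n ih =>
  subst hn
  have hle : ∀ H ∈ S, H ⊆ S.sup id := fun H hH => Finset.le_sup (f := id) hH
  by_cases htop : S.sup id ∈ S
  · set X := S.sup id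
    have hErase : (S.erase X).sup id ⊆ X := Finset.sup_mono (Finset.erase_subset X S)
    by_cases hXE : (S.erase X).sup id ⊆ E
    · obtain ⟨v, hvX, hvE⟩ := Finset.not_subset.1 hSE
      exact ⟨v, hvX, hvE, isNestPoint_of_notMem_sup_erase fun hv => hvE (hXE hv)⟩
    · have hEX : E ≠ X := fun hEX => hSE hEX.ge
      have hcard : ((S.erase X).sup id).card + (S.erase X).card < X.card + S.card :=
        add_lt_add_of_le_of_lt (Finset.card_le_card hErase) (Finset.card_erase_lt_of_mem htop)
      obtain ⟨v, hv, hvE, hnest⟩ := ih _ hcard (h.mono (Finset.erase_subset X S))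
        (Finset.mem_erase.2 ⟨hEX, hE⟩) hXE rfl
      exact ⟨v, hErase hv, hvE, hnest.of_erase hle⟩
  · obtain ⟨F, hF, G, hG, hFG, hEG, hjoint⟩ := h.exists_maximal_inter_subset hE htop
    have hsup : (S.image (· ∩ F)).sup id = F := by
      rw [Finset.sup_image]
      exact le_antisymm (Finset.sup_le fun H _ => Finset.inter_subset_right)
        (Finset.le_sup_of_le hF (Finset.inter_self F).ge)
    have hcard : F.card + (S.image (· ∩ F)).card < (S.sup id).card + S.card :=
      add_lt_add_of_lt_of_le
        (Finset.card_lt_card ((hle F hF).ssubset_of_ne fun hFS => htop (hFS ▸ hF)))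
        Finset.card_image_le
    obtain ⟨v, hvF, hvG, hnest⟩ := ih _ (by rwa [hsup]) (h.image_inter F)
      (Finset.mem_image_of_mem _ hG) (by simpa [hsup, Finset.subset_inter_iff] using hFG) rfl
    rw [hsup] at hvF
    replace hvG : v ∉ G := fun hv => hvG (Finset.mem_inter.2 ⟨hv, hvF⟩)
    refine ⟨v, hle F hF hvF, fun hvE => hvG (hEG (Finset.mem_inter.2 ⟨hvF, hvE⟩)),
      hnest.of_image_inter fun H hH hv => ?_⟩
    by_contra hHF
    exact hvG (hjoint H hH hHF (Finset.mem_inter.2 ⟨hvF, hv⟩))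

theorem HasLeafProp.exists_isNestPoint {S : Finset (Finset α)} (h : HasLeafProp S)
    {H : Finset α} (hH : H ∈ S) (hne : H.Nonempty) : ∃ v, (∃ H ∈ S, v ∈ H) ∧ IsNestPoint S v := by
  have hsub : H ⊆ (insert ∅ S).sup id := Finset.le_sup (f := id) (Finset.mem_insert_of_mem hH)
  obtain ⟨v, hv, -, hnest⟩ := h.insert_empty.exists_isNestPoint_notMem
    (Finset.mem_insert_self ∅ S) fun hsup => hne.ne_empty (Finset.subset_empty.1 (hsub.trans hsup))
  refine ⟨v, ?_, fun H hH H' hH' => hnest H (Finset.mem_insert_of_mem hH) H'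
    (Finset.mem_insert_of_mem hH')⟩
  simpa [Finset.mem_sup] using hv

end Forest

section Matchings

variable {α : Type} [DecidableEq α]

theorem isMatchingOf_iff_pairwiseDisjoint {S M : Finset (Finset α)} :
    IsMatchingOf S M ↔ M ⊆ S ∧ (M : Set (Finset α)).PairwiseDisjoint id := by
  simp only [IsMatchingOf, Set.PairwiseDisjoint, Set.Pairwise, Function.onFun, id,
    Finset.mem_coe, Finset.disjoint_iff_inter_eq_empty]

/-- The up-closed family of vertex sets containing at least `k` pairwise disjoint members of
`S`, corresponding to the `k`-th squarefree power of the ideal generated by `S`. -/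
def containsMatching (S : Finset (Finset α)) (k : ℕ) : Set (Finset α) :=
  {T | ∃ M, IsMatchingOf S M ∧ k ≤ M.card ∧ ∀ H ∈ M, H ⊆ T}

theorem isUpperSet_containsMatching (S : Finset (Finset α)) (k : ℕ) :
    IsUpperSet (containsMatching S k) :=
  fun _ _ hT ⟨M, hM, hk, hMT⟩ => ⟨M, hM, hk, fun H hH => (hMT H hH).trans hT⟩

theorem empty_mem_containsMatching_zero (S : Finset (Finset α)) : ∅ ∈ containsMatching S 0 :=
  ⟨∅, ⟨Finset.empty_subset S, by simp only [Finset.notMem_empty, false_imp_iff, implies_true]⟩,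
    Nat.zero_le _, by simp only [Finset.notMem_empty, false_imp_iff, implies_true]⟩

theorem empty_notMem_containsMatching {S : Finset (Finset α)} (hS : ∀ F ∈ S, F.Nonempty) {k : ℕ}
    (hk : 1 ≤ k) : ∅ ∉ containsMatching S k := by
  rintro ⟨M, hM, hkM, hempty⟩
  obtain ⟨H, hH⟩ := Finset.card_pos.1 (hk.trans hkM)
  exact (hS H (hM.1 hH)).ne_empty (Finset.subset_empty.1 (hempty H hH))

/-- A set `B` such that members of `S` not contained in `B` which are disjoint outside `B` are
disjoint. Contracting a nest block reflects matchings. -/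
def IsNestBlock (S : Finset (Finset α)) (B : Finset α) : Prop :=
  ∀ H ∈ S, ∀ H' ∈ S, ¬ H ⊆ B → ¬ H' ⊆ B → Disjoint (H \ B) (H' \ B) → Disjoint H H'

theorem mem_containsMatching_contract {S : Finset (Finset α)} {B u T : Finset α} {v : α} {k : ℕ}
    (hv : ∀ H ∈ S, H ⊆ B → v ∈ H) (huB : u ⊆ B) (hvu : v ∉ u)
    (hvT : v ∉ T) (hT : T ∪ u ∈ containsMatching S k) :
    T ∈ containsMatching ((S.filter (v ∉ ·)).image (· \ B)) k := by
  obtain ⟨M, hM, hkM, hMT⟩ := hT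
  obtain ⟨hMS, hdisj⟩ := isMatchingOf_iff_pairwiseDisjoint.1 hM
  have hvM (H) (hH : H ∈ M) : v ∉ H := fun hvH =>
    (Finset.mem_union.1 (hMT H hH hvH)).elim hvT hvu
  have hinj : Set.InjOn (· \ B) (M : Set (Finset α)) := fun H hH H' hH' heq => by
    obtain ⟨w, hwH, hwB⟩ := Finset.not_subset.1 fun hHB => hvM H hH (hv H (hMS hH) hHB)
    have hw : w ∈ H' \ B := heq.subset (Finset.mem_sdiff.2 ⟨hwH, hwB⟩)
    exact hdisj.elim_finset hH hH' w hwH (Finset.mem_sdiff.1 hw).1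
  refine ⟨M.image (· \ B), isMatchingOf_iff_pairwiseDisjoint.2 ⟨Finset.image_subset_image
    fun H hH => Finset.mem_filter.2 ⟨hMS hH, hvM H hH⟩, ?_⟩, ?_, ?_⟩
  · exact hdisj.image_finset_of_le fun H => Finset.sdiff_subset
  · rwa [Finset.card_image_of_injOn hinj]
  · simp only [Finset.forall_mem_image]
    intro H hH w hw
    obtain ⟨hwH, hwB⟩ := Finset.mem_sdiff.1 hw
    exact (Finset.mem_union.1 (hMT H hH hwH)).resolve_right fun hwu => hwB (huB hwu)

theorem union_mem_containsMatching_of_contract {S : Finset (Finset α)} {B u T : Finset α}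
    {v : α} {k : ℕ} (hv : ∀ H ∈ S, H ⊆ B → v ∈ H)
    (hu : ∀ H ∈ S, v ∉ H → H ∩ B ⊆ u) (hnest : IsNestBlock S B)
    (hT : T ∈ containsMatching ((S.filter (v ∉ ·)).image (· \ B)) k) :
    T ∪ u ∈ containsMatching S k := by
  obtain ⟨M, hM, hkM, hMT⟩ := hT
  obtain ⟨hMS, hdisj⟩ := isMatchingOf_iff_pairwiseDisjoint.1 hM
  have hsurj : Set.SurjOn (· \ B) (S.filter (v ∉ ·) : Set (Finset α)) M := by
    rwa [Set.SurjOn, ← Finset.coe_image, Finset.coe_subset]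
  obtain ⟨N, hNS, hinj, rfl⟩ := Finset.exists_subset_injOn_image_eq_of_surjOn _ M hsurj
  have hN (H) (hH : H ∈ N) : H ∈ S ∧ v ∉ H := Finset.mem_filter.1 (hNS hH)
  have hNB (H) (hH : H ∈ N) : ¬ H ⊆ B := fun hHB => (hN H hH).2 (hv H (hN H hH).1 hHB)
  refine ⟨N, isMatchingOf_iff_pairwiseDisjoint.2 ⟨fun H hH => (hN H hH).1, ?_⟩, ?_, ?_⟩
  · intro H hH H' hH' hne
    refine hnest H (hN H hH).1 H' (hN H' hH').1 (hNB H hH) (hNB H' hH') ?_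
    exact hdisj (Finset.mem_coe.2 (Finset.mem_image_of_mem _ hH))
      (Finset.mem_coe.2 (Finset.mem_image_of_mem _ hH')) fun heq => hne (hinj hH hH' heq)
  · rwa [Finset.card_image_of_injOn hinj] at hkM
  · intro H hH w hwH
    by_cases hwB : w ∈ B
    · exact Finset.mem_union_right T (hu H (hN H hH).1 (hN H hH).2 (Finset.mem_inter.2 ⟨hwH, hwB⟩))
    · exact Finset.mem_union_left u (hMT _ (Finset.mem_image_of_mem _ hH)
        (Finset.mem_sdiff.2 ⟨hwH, hwB⟩))

end Matchings

section BlockSystems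

variable {α : Type} [DecidableEq α]

/-- A set system whose vertices are partitioned into blocks (the members of `A`) such that each
block contains a member and the traces of the members on each block form a chain. A grafted complex
is a block system with its leaves as blocks, and unlike grafted complexes block systems are stable
under removing and contracting suitable blocks. -/
structure IsBlockSystem (A S : Finset (Finset α)) : Prop where
  pairwiseDisjoint : (A : Set (Finset α)).PairwiseDisjoint id
  nonempty : ∀ H ∈ S, H.Nonempty
  cover : ∀ H ∈ S, ∀ v ∈ H, ∃ B ∈ A, v ∈ B
  trace_chain : ∀ B ∈ A, ∀ H ∈ S, ∀ H' ∈ S, H ∩ B ⊆ H' ∨ H' ∩ B ⊆ H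
  exists_subset : ∀ B ∈ A, ∃ H ∈ S, H ⊆ B
  hasLeafProp : HasLeafProp S

namespace IsBlockSystem

variable {A S : Finset (Finset α)} {B : Finset α}

theorem exists_trace_min (h : IsBlockSystem A S) (hB : B ∈ A) {T : Finset (Finset α)}
    (hT : T ⊆ S) (hne : T.Nonempty) : ∃ H ∈ T, ∀ H' ∈ T, H ∩ B ⊆ H' := by
  obtain ⟨H, hH, hmin⟩ := T.exists_min_image (fun H => (H ∩ B).card) hne
  refine ⟨H, hH, fun H' hH' => ?_⟩
  refine (h.trace_chain B hB H (hT hH) H' (hT hH')).elim id fun hle => ?_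
  have heq : H' ∩ B = H ∩ B := Finset.eq_of_subset_of_card_le
    (Finset.subset_inter hle Finset.inter_subset_right) (hmin H' hH')
  exact heq ▸ Finset.inter_subset_left

theorem exists_min_subset (h : IsBlockSystem A S) (hB : B ∈ A) :
    ∃ F ∈ S, F ⊆ B ∧ ∀ H ∈ S, H ⊆ B → F ⊆ H := by
  obtain ⟨G, hG, hGB⟩ := h.exists_subset B hB
  obtain ⟨F, hF, hmin⟩ := h.exists_trace_min hB (Finset.filter_subset (· ⊆ B) S)
    ⟨G, Finset.mem_filter.2 ⟨hG, hGB⟩⟩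
  obtain ⟨hFS, hFB⟩ := Finset.mem_filter.1 hF
  rw [Finset.inter_eq_left.2 hFB] at hmin
  exact ⟨F, hFS, hFB, fun H hH hHB => hmin H (Finset.mem_filter.2 ⟨hH, hHB⟩)⟩

theorem exists_mem_of_not_disjoint (h : IsBlockSystem A S) (hB : B ∈ A) :
    ∃ v ∈ B, ∀ H ∈ S, ¬ Disjoint H B → v ∈ H := by
  obtain ⟨F, hF, hFB⟩ := h.exists_subset B hB
  have hFmeets : ¬ Disjoint F B := fun hdisj =>
    (h.nonempty F hF).ne_empty (hdisj.eq_bot_of_le hFB)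
  obtain ⟨H, hH, hmin⟩ := h.exists_trace_min hB (Finset.filter_subset (¬ Disjoint · B) S)
    ⟨F, Finset.mem_filter.2 ⟨hF, hFmeets⟩⟩
  obtain ⟨v, hvH, hvB⟩ := Finset.not_disjoint_iff.1 (Finset.mem_filter.1 hH).2
  exact ⟨v, hvB, fun H' hH' hmeets => hmin H' (Finset.mem_filter.2 ⟨hH', hmeets⟩)
    (Finset.mem_inter.2 ⟨hvH, hvB⟩)⟩

theorem not_disjoint (h : IsBlockSystem A S) (hB : B ∈ A) {H H' : Finset α} (hH : H ∈ S)
    (hH' : H' ∈ S) (hHB : ¬ Disjoint H B) (hHB' : ¬ Disjoint H' B) : ¬ Disjoint H H' := by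
  obtain ⟨v, -, hv⟩ := h.exists_mem_of_not_disjoint hB
  exact Finset.not_disjoint_iff.2 ⟨v, hv H hH hHB, hv H' hH' hHB'⟩

theorem exists_not_disjoint (h : IsBlockSystem A S) {H : Finset α} (hH : H ∈ S) :
    ∃ B ∈ A, ¬ Disjoint H B := by
  obtain ⟨v, hv⟩ := h.nonempty H hH
  obtain ⟨B, hB, hvB⟩ := h.cover H hH v hv
  exact ⟨B, hB, Finset.not_disjoint_iff.2 ⟨v, hv, hvB⟩⟩

theorem card_le_of_isMatchingOf (h : IsBlockSystem A S) {M : Finset (Finset α)}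
    (hM : IsMatchingOf S M) : M.card ≤ A.card := by
  obtain ⟨hMS, hdisj⟩ := isMatchingOf_iff_pairwiseDisjoint.1 hM
  choose! f hfA hf using fun H (hH : H ∈ S) => h.exists_not_disjoint hH
  refine Finset.card_le_card_of_injOn f (fun H hH => hfA H (hMS hH)) fun H hH H' hH' heq => ?_
  refine hdisj.elim hH hH' (h.not_disjoint (hfA H (hMS hH)) (hMS hH) (hMS hH') (hf H (hMS hH)) ?_)
  rw [heq]
  exact hf H' (hMS hH')

theorem containsMatching_eq_empty (h : IsBlockSystem A S) {k : ℕ} (hk : A.card < k) :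
    containsMatching S k = ∅ := by
  refine Set.eq_empty_of_forall_notMem ?_
  rintro T ⟨M, hM, hkM, -⟩
  exact absurd (h.card_le_of_isMatchingOf hM) (hk.trans_le hkM).not_ge

theorem exists_mem_sdiff_of_not_subset (h : IsBlockSystem A S) (hB : B ∈ A)
    {f : Finset α → α} (hfB : ∀ B ∈ A, f B ∈ B) (hf : ∀ B ∈ A, ∀ H ∈ S, ¬ Disjoint H B → f B ∈ H)
    {H : Finset α} (hH : H ∈ S) (hHB : ¬ H ⊆ B) : ∃ w ∈ A.image f, w ∈ H \ B := by
  obtain ⟨x, hxH, hxB⟩ := Finset.not_subset.1 hHB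
  obtain ⟨B', hB', hxB'⟩ := h.cover H hH x hxH
  have hne : B' ≠ B := fun heq => hxB (heq ▸ hxB')
  refine ⟨f B', Finset.mem_image_of_mem f hB', Finset.mem_sdiff.2
    ⟨hf B' hB' H hH (Finset.not_disjoint_iff.2 ⟨x, hxH, hxB'⟩), fun hmem => hne ?_⟩⟩
  exact h.pairwiseDisjoint.elim_finset hB' hB (f B') (hfB B' hB') hmem

theorem isNestBlock_of_isNestPoint (h : IsBlockSystem A S) (hB : B ∈ A) {f : Finset α → α}
    (hfB : ∀ B ∈ A, f B ∈ B) (hf : ∀ B ∈ A, ∀ H ∈ S, ¬ Disjoint H B → f B ∈ H)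
    (hnest : IsNestPoint (S.image (· ∩ A.image f)) (f B)) : IsNestBlock S B := by
  intro H hH H' hH' hHB hHB' hdisj
  by_contra hmeet
  obtain ⟨x, hxH, hxH'⟩ := Finset.not_disjoint_iff.1 hmeet
  have hxB : x ∈ B := by
    by_contra hxB
    exact Finset.disjoint_left.1 hdisj (Finset.mem_sdiff.2 ⟨hxH, hxB⟩)
      (Finset.mem_sdiff.2 ⟨hxH', hxB⟩)
  have hmem {H} (hH : H ∈ S) (hxH : x ∈ H) : f B ∈ H ∩ A.image f := Finset.mem_inter.2
    ⟨hf B hB H hH (Finset.not_disjoint_iff.2 ⟨x, hxH, hxB⟩), Finset.mem_image_of_mem f hB⟩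
  have hnot_subset {H H'} (hH : H ∈ S) (hHB : ¬ H ⊆ B) (hdisj : Disjoint (H \ B) (H' \ B)) :
      ¬ H ∩ A.image f ⊆ H' ∩ A.image f := fun hsub => by
    obtain ⟨w, hwf, hw⟩ := h.exists_mem_sdiff_of_not_subset hB hfB hf hH hHB
    obtain ⟨hwH, hwB⟩ := Finset.mem_sdiff.1 hw
    have hwH' := (Finset.mem_inter.1 (hsub (Finset.mem_inter.2 ⟨hwH, hwf⟩))).1
    exact Finset.disjoint_left.1 hdisj hw (Finset.mem_sdiff.2 ⟨hwH', hwB⟩)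
  exact (hnest _ (Finset.mem_image_of_mem _ hH) _ (Finset.mem_image_of_mem _ hH')
    (hmem hH hxH) (hmem hH' hxH')).elim (hnot_subset hH hHB hdisj)
    (hnot_subset hH' hHB' hdisj.symm)

theorem exists_isNestBlock (h : IsBlockSystem A S) (hA : A.Nonempty) :
    ∃ B ∈ A, IsNestBlock S B := by
  obtain ⟨B, hB⟩ := hA
  obtain ⟨v, -⟩ := h.exists_mem_of_not_disjoint hB
  have : Nonempty α := ⟨v⟩
  choose! f hfB hf using fun B (hB : B ∈ A) => h.exists_mem_of_not_disjoint hB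
  -- Tracing on one point per block keeps the incidences between members and blocks, and a nest
  -- point of the resulting forest singles out the block.
  obtain ⟨H, hH, -⟩ := h.exists_subset B hB
  obtain ⟨B', hB', hHB'⟩ := h.exists_not_disjoint hH
  have hne : (H ∩ A.image f).Nonempty :=
    ⟨f B', Finset.mem_inter.2 ⟨hf B' hB' H hH hHB', Finset.mem_image_of_mem f hB'⟩⟩
  obtain ⟨v, ⟨G, hG, hvG⟩, hnest⟩ := (h.hasLeafProp.image_inter _).exists_isNestPoint
    (Finset.mem_image_of_mem _ hH) hne
  obtain ⟨G, -, rfl⟩ := Finset.mem_image.1 hG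
  obtain ⟨B, hB, rfl⟩ := Finset.mem_image.1 (Finset.mem_inter.1 hvG).2
  exact ⟨B, hB, h.isNestBlock_of_isNestPoint hB hfB hf hnest⟩

theorem delete (h : IsBlockSystem A S) (hB : B ∈ A) :
    IsBlockSystem (A.erase B) (S.filter (Disjoint · B)) where
  pairwiseDisjoint := h.pairwiseDisjoint.subset (Finset.coe_subset.2 (Finset.erase_subset B A))
  nonempty H hH := h.nonempty H (Finset.mem_filter.1 hH).1
  cover H hH v hv := by
    obtain ⟨hHS, hdisj⟩ := Finset.mem_filter.1 hH
    obtain ⟨B', hB', hvB'⟩ := h.cover H hHS v hv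
    refine ⟨B', Finset.mem_erase.2 ⟨?_, hB'⟩, hvB'⟩
    rintro rfl
    exact Finset.disjoint_left.1 hdisj hv hvB'
  trace_chain B' hB' H hH H' hH' := h.trace_chain B' (Finset.mem_of_mem_erase hB') H
    (Finset.mem_filter.1 hH).1 H' (Finset.mem_filter.1 hH').1
  exists_subset B' hB' := by
    obtain ⟨hne, hB'A⟩ := Finset.mem_erase.1 hB'
    obtain ⟨H, hH, hHB'⟩ := h.exists_subset B' hB'A
    exact ⟨H, Finset.mem_filter.2
      ⟨hH, (h.pairwiseDisjoint hB'A hB hne).mono_left hHB'⟩, hHB'⟩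
  hasLeafProp := h.hasLeafProp.mono (Finset.filter_subset _ S)

theorem contract (h : IsBlockSystem A S) (hB : B ∈ A) {v : α} (hvB : v ∈ B)
    (hv : ∀ H ∈ S, H ⊆ B → v ∈ H) :
    IsBlockSystem (A.erase B) ((S.filter (v ∉ ·)).image (· \ B)) where
  pairwiseDisjoint := h.pairwiseDisjoint.subset (Finset.coe_subset.2 (Finset.erase_subset B A))
  nonempty := by
    simp only [Finset.forall_mem_image, Finset.mem_filter, Finset.sdiff_nonempty]
    exact fun H ⟨hH, hvH⟩ hHB => hvH (hv H hH hHB)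
  cover := by
    simp only [Finset.forall_mem_image, Finset.mem_filter, Finset.mem_sdiff]
    rintro H ⟨hH, -⟩ w ⟨hwH, hwB⟩
    obtain ⟨B', hB', hwB'⟩ := h.cover H hH w hwH
    exact ⟨B', Finset.mem_erase.2 ⟨fun heq => hwB (heq ▸ hwB'), hB'⟩, hwB'⟩
  trace_chain B' hB' := by
    obtain ⟨hne, hB'A⟩ := Finset.mem_erase.1 hB'
    have hdisj : Disjoint B' B := h.pairwiseDisjoint hB'A hB hne
    have htrace {H H' : Finset α} (hle : H ∩ B' ⊆ H') : (H \ B) ∩ B' ⊆ H' \ B := fun w hw =>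
      have hwB' := (Finset.mem_inter.1 hw).2
      have hwH := (Finset.mem_sdiff.1 (Finset.mem_inter.1 hw).1).1
      Finset.mem_sdiff.2 ⟨hle (Finset.mem_inter.2 ⟨hwH, hwB'⟩), Finset.disjoint_left.1 hdisj hwB'⟩
    simp only [Finset.forall_mem_image, Finset.mem_filter]
    exact fun H ⟨hH, _⟩ H' ⟨hH', _⟩ =>
      (h.trace_chain B' hB'A H hH H' hH').imp htrace htrace
  exists_subset B' hB' := by
    obtain ⟨hne, hB'A⟩ := Finset.mem_erase.1 hB'
    obtain ⟨H, hH, hHB'⟩ := h.exists_subset B' hB'A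
    have hvH : v ∉ H := fun hvH =>
      Finset.disjoint_left.1 (h.pairwiseDisjoint hB'A hB hne) (hHB' hvH) hvB
    exact ⟨H \ B, Finset.mem_image_of_mem _ (Finset.mem_filter.2 ⟨hH, hvH⟩),
      Finset.sdiff_subset.trans hHB'⟩
  hasLeafProp := by
    have hinter : S.image (· ∩ (S.sup id \ B)) = S.image (· \ B) :=
      Finset.image_congr fun H hH => by
        have hle : H ⊆ S.sup id := Finset.le_sup (f := id) hH
        simp only [← Finset.inter_sdiff_assoc, Finset.inter_eq_left.2 hle]
    exact (hinter ▸ h.hasLeafProp.image_inter (S.sup id \ B)).mono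
      (Finset.image_subset_image (Finset.filter_subset _ S))

theorem mem_containsMatching_delete_of_union_mem (h : IsBlockSystem A S) (hB : B ∈ A)
    {F T : Finset α} (hFB : F ⊆ B) {k : ℕ} (hT : T ∪ F ∈ containsMatching S (k + 1)) :
    T ∈ containsMatching (S.filter (Disjoint · B)) k := by
  obtain ⟨M, hM, hkM, hMT⟩ := hT
  obtain ⟨hMS, hdisj⟩ := isMatchingOf_iff_pairwiseDisjoint.1 hM
  have hcard : (M.filter (¬ Disjoint · B)).card ≤ 1 := by
    refine Finset.card_le_one.2 fun H hH H' hH' => ?_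
    obtain ⟨hHM, hHB⟩ := Finset.mem_filter.1 hH
    obtain ⟨hHM', hHB'⟩ := Finset.mem_filter.1 hH'
    exact hdisj.elim hHM hHM' (h.not_disjoint hB (hMS hHM) (hMS hHM') hHB hHB')
  have hsum := Finset.card_filter_add_card_filter_not (s := M) (Disjoint · B)
  refine ⟨M.filter (Disjoint · B), isMatchingOf_iff_pairwiseDisjoint.2
    ⟨Finset.filter_subset_filter _ hMS,
      hdisj.subset (Finset.coe_subset.2 (Finset.filter_subset _ M))⟩, by omega, fun H hH => ?_⟩
  obtain ⟨hHM, hHB⟩ := Finset.mem_filter.1 hH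
  exact (hHB.mono_right hFB).left_le_of_le_sup_right (hMT H hHM)

theorem union_mem_containsMatching_succ (h : IsBlockSystem A S) {F T : Finset α} (hF : F ∈ S)
    (hFB : F ⊆ B) {k : ℕ} (hT : T ∈ containsMatching (S.filter (Disjoint · B)) k) :
    T ∪ F ∈ containsMatching S (k + 1) := by
  obtain ⟨M, hM, hkM, hMT⟩ := hT
  obtain ⟨hMS, hdisj⟩ := isMatchingOf_iff_pairwiseDisjoint.1 hM
  have hMF (H) (hH : H ∈ M) : Disjoint F H :=
    ((Finset.mem_filter.1 (hMS hH)).2.mono_right hFB).symm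
  have hFM : F ∉ M := fun hmem =>
    (h.nonempty F hF).ne_empty (disjoint_self.1 (hMF F hmem))
  refine ⟨insert F M, isMatchingOf_iff_pairwiseDisjoint.2 ⟨Finset.insert_subset hF
    (hMS.trans (Finset.filter_subset _ S)), ?_⟩, ?_, ?_⟩
  · rw [Finset.coe_insert]
    exact hdisj.insert fun H hH _ => hMF H hH
  · rw [Finset.card_insert_of_notMem hFM]
    exact Nat.succ_le_succ hkM
  · exact (Finset.forall_mem_insert _ _ _).2 ⟨Finset.subset_union_right,
      fun H hH => (hMT H hH).trans Finset.subset_union_left⟩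

end IsBlockSystem

end BlockSystems

section Regularity

open RingTheory.Sequence

variable {α : Type} [DecidableEq α]

namespace IsBlockSystem

variable {A S : Finset (Finset α)} {B : Finset α}

theorem setOf_union_mem_containsMatching_union_meeting (h : IsBlockSystem A S) (hB : B ∈ A)
    {F W : Finset α} (hF : F ∈ S) (hFB : F ⊆ B) (hWB : Disjoint W B) (k : ℕ) :
    {T | T ∪ F ∈ containsMatching S (k + 1) ∪ meeting W} =
      containsMatching (S.filter (Disjoint · B)) k ∪ meeting W := by
  ext T
  refine or_congr ⟨h.mem_containsMatching_delete_of_union_mem hB hFB,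
    h.union_mem_containsMatching_succ hF hFB⟩ ?_
  simp only [meeting, Set.mem_ofPred_eq, Finset.disjoint_union_right, hWB.mono_right hFB, and_true]

theorem exists_contract_eq (h : IsBlockSystem A S) (hB : B ∈ A) (hnest : IsNestBlock S B)
    {F : Finset α} (hFS : F ∈ S) (hFB : F ⊆ B) (hmin : ∀ H ∈ S, H ⊆ B → F ⊆ H)
    {W u : Finset α} (hWB : Disjoint W B) (hu : u ⊂ F) (k : ℕ) :
    ∃ v ∈ F \ u, (∀ H ∈ S, H ⊆ B → v ∈ H) ∧
      {T | T ∪ u ∈ containsMatching S k ∪ meeting W} ∪ {T | v ∈ T} =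
        containsMatching ((S.filter (v ∉ ·)).image (· \ B)) k ∪ meeting (insert v W) := by
  have huB : u ⊆ B := hu.subset.trans hFB
  have hFu : ¬ F ∩ B ⊆ u := by
    rw [Finset.inter_eq_left.2 hFB]
    exact hu.not_subset
  have hFmem : F ∈ S.filter (¬ · ∩ B ⊆ u) := Finset.mem_filter.2 ⟨hFS, hFu⟩
  obtain ⟨H, hH, hHmin⟩ := h.exists_trace_min hB (Finset.filter_subset _ S) ⟨F, hFmem⟩
  obtain ⟨v, hvH, hvu⟩ := Finset.not_subset.1 (Finset.mem_filter.1 hH).2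
  have hvF : v ∈ F := hHmin F hFmem hvH
  have hv (H) (hH : H ∈ S) (hHB : H ⊆ B) : v ∈ H := hmin H hH hHB hvF
  have htrace (H') (hH' : H' ∈ S) (hvH' : v ∉ H') : H' ∩ B ⊆ u := by
    by_contra hsub
    exact hvH' (hHmin H' (Finset.mem_filter.2 ⟨hH', hsub⟩) hvH)
  refine ⟨v, Finset.mem_sdiff.2 ⟨hvF, hvu⟩, hv, Set.ext fun T => ?_⟩
  have hmeeting : T ∪ u ∈ meeting W ↔ T ∈ meeting W := by
    simp only [meeting, Set.mem_ofPred_eq, Finset.disjoint_union_right, hWB.mono_right huB,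
      and_true]
  have hinsert : T ∈ meeting (insert v W) ↔ v ∈ T ∨ T ∈ meeting W := by
    simp only [meeting, Set.mem_ofPred_eq, Finset.disjoint_insert_left, not_and_or, not_not]
  have hcontract (hvT : v ∉ T) : T ∪ u ∈ containsMatching S k ↔
      T ∈ containsMatching ((S.filter (v ∉ ·)).image (· \ B)) k :=
    ⟨mem_containsMatching_contract hv huB hvu hvT,
      union_mem_containsMatching_of_contract hv htrace hnest⟩
  simp only [Set.mem_union, Set.mem_ofPred_eq, hmeeting, hinsert]
  tauto

variable [Fintype α] {R : Type*} [CommRing R]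

theorem isWeaklyRegular_esymmSeq (h : IsBlockSystem A S) {W : Finset α}
    (hW : ∀ B ∈ A, Disjoint W B) {k d : ℕ} (hk : k ≤ A.card + 1)
    (hd : W.card + A.card + 1 + d = k + Fintype.card α) :
    IsWeaklyRegular (MvPolynomial α R ⧸ sqfreeIdeal R (containsMatching S k ∪ meeting W))
      (esymmSeq α R d) := by
  induction A using Finset.strongInduction generalizing S W k with
  | H A ih =>
  obtain hkA | hkA := hk.eq_or_lt
  · have hdW : d = Wᶜ.card := by rw [Finset.card_compl]; omega
    rw [h.containsMatching_eq_empty (hkA ▸ Nat.lt_succ_self _), Set.empty_union, hdW]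
    exact isWeaklyRegular_esymmSeq_meeting W
  cases k with
  | zero =>
    rw [sqfreeIdeal_eq_top (Or.inl (empty_mem_containsMatching_zero S))]
    exact isWeaklyRegular_of_subsingleton _
  | succ k =>
  have hA : A.Nonempty := Finset.card_pos.1 (by omega)
  obtain ⟨B, hB, hnest⟩ := h.exists_isNestBlock hA
  obtain ⟨F, hFS, hFB, hmin⟩ := h.exists_min_subset hB
  have hcard : (A.erase B).card + 1 = A.card := Finset.card_erase_add_one hB
  have hW' (B') (hB' : B' ∈ A.erase B) : Disjoint W B' := hW B' (Finset.mem_of_mem_erase hB')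
  refine isWeaklyRegular_sqfreeIdeal_of_filtration
    ((isUpperSet_containsMatching S _).union (isUpperSet_meeting W)) F (fun u hu => ?_) ?_
  · obtain ⟨v, hvFu, hv, heq⟩ := h.exists_contract_eq hB hnest hFS hFB hmin (hW B hB)
      hu (k + 1)
    have hvB : v ∈ B := hFB (Finset.mem_sdiff.1 hvFu).1
    have hvW : v ∉ W := Finset.disjoint_right.1 (hW B hB) hvB
    refine ⟨v, hvFu, ?_⟩
    rw [heq]
    refine ih _ (Finset.erase_ssubset hB) (h.contract hB hvB hv) (fun B' hB' => ?_) (by omega) ?_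
    · refine Finset.disjoint_insert_left.2 ⟨fun hvB' => ?_, hW' B' hB'⟩
      obtain ⟨hne, hB'A⟩ := Finset.mem_erase.1 hB'
      exact hne (h.pairwiseDisjoint.elim_finset hB'A hB v hvB' hvB)
    · rw [Finset.card_insert_of_notMem hvW]
      omega
  · rw [h.setOf_union_mem_containsMatching_union_meeting hB hFS hFB (hW B hB)]
    exact ih _ (Finset.erase_ssubset hB) (h.delete hB) hW' (by omega) (by omega)

end IsBlockSystem

end Regularity

section SquarefreePowers

variable {σ : Type*} {R : Type*} [CommRing R]

theorem sum_sum_single_one_le_iff {ι : Type*} [Fintype ι] {H : ι → Finset σ} {T : Finset σ} :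
    ∑ i, ∑ v ∈ H i, Finsupp.single v 1 ≤ ∑ v ∈ T, Finsupp.single v 1 ↔
      (∀ i, H i ⊆ T) ∧ Pairwise (Function.onFun Disjoint H) := by
  classical
  have hcoeff (v : σ) : (∑ i, ∑ v ∈ H i, Finsupp.single v 1) v =
      (Finset.univ.filter (v ∈ H ·)).card := by
    simp only [Finsupp.finsetSum_apply, Finsupp.single_apply, Finset.sum_ite_eq',
      Finset.card_filter]
  have hT (v : σ) : (∑ v ∈ T, Finsupp.single v 1) v = if v ∈ T then 1 else 0 := by
    simp only [Finsupp.finsetSum_apply, Finsupp.single_apply, Finset.sum_ite_eq']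
  simp only [Finsupp.le_def, hcoeff, hT]
  refine ⟨fun h => ⟨fun i v hv => ?_, fun i j hij => ?_⟩, fun ⟨hsub, hdisj⟩ v => ?_⟩
  · by_contra hvT
    have hcard := h v
    rw [if_neg hvT, Nat.le_zero, Finset.card_eq_zero] at hcard
    exact Finset.notMem_empty i (hcard ▸ Finset.mem_filter.2 ⟨Finset.mem_univ i, hv⟩)
  · refine Finset.disjoint_left.2 fun v hvi hvj => hij ?_
    have hcard : (Finset.univ.filter (v ∈ H ·)).card ≤ 1 := (h v).trans (by split_ifs <;> simp)
    exact Finset.card_le_one.1 hcard i (Finset.mem_filter.2 ⟨Finset.mem_univ i, hvi⟩) j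
      (Finset.mem_filter.2 ⟨Finset.mem_univ j, hvj⟩)
  · split_ifs with hvT
    · refine Finset.card_le_one.2 fun i hi j hj => ?_
      by_contra hij
      exact Finset.disjoint_left.1 (hdisj hij) (Finset.mem_filter.1 hi).2 (Finset.mem_filter.1 hj).2
    · exact (Finset.card_eq_zero.2 (Finset.filter_eq_empty_iff.2
        fun i _ hvi => hvT (hsub i hvi))).le

open scoped Pointwise in
theorem sqfreeIdeal_pow (P : Set (Finset σ)) (k : ℕ) :
    sqfreeIdeal R P ^ k = Ideal.span ((fun H : Fin k → Finset σ => ∏ i, ∏ v ∈ H i, X v) ''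
      {H | ∀ i, H i ∈ P}) := by
  rw [sqfreeIdeal, Ideal.span, Submodule.span_pow]
  congr 1
  ext p
  rw [Set.mem_pow_iff_prod]
  constructor
  · rintro ⟨f, hf, rfl⟩
    choose H hHP hHf using hf
    exact ⟨H, hHP, Finset.prod_congr rfl fun i _ => hHf i⟩
  · rintro ⟨H, hHP, rfl⟩
    exact ⟨fun i => ∏ v ∈ H i, X v, fun i => ⟨H i, hHP i, rfl⟩, rfl⟩

theorem prod_X_mem_sqfreeIdeal_pow_iff [Nontrivial R] {P : Set (Finset σ)} {k : ℕ}
    {T : Finset σ} :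
    ∏ v ∈ T, X v ∈ sqfreeIdeal R P ^ k ↔ ∃ H : Fin k → Finset σ,
      (∀ i, H i ∈ P) ∧ (∀ i, H i ⊆ T) ∧ Pairwise (Function.onFun Disjoint H) := by
  have hsupp : (monomial (∑ v ∈ T, Finsupp.single v 1) (1 : R)).support =
      {∑ v ∈ T, Finsupp.single v 1} := by
    classical rw [support_monomial, if_neg one_ne_zero]
  simp only [sqfreeIdeal_pow, prod_X_eq_monomial, ← monomial_sum_one]
  rw [← Set.image_image (fun m => monomial m (1 : R)), mem_ideal_span_monomial_image, hsupp]
  simp only [Finset.mem_singleton, forall_eq,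
    Set.exists_mem_image, Set.mem_ofPred_eq, sum_sum_single_one_le_iff]

variable {α : Type} [DecidableEq α]

theorem prod_X_mem_sqfreeIdeal_pow_iff_containsMatching [Nontrivial R] {S : Finset (Finset α)}
    (hS : ∀ F ∈ S, F.Nonempty) {k : ℕ} {T : Finset α} :
    ∏ v ∈ T, X v ∈ sqfreeIdeal R (S : Set (Finset α)) ^ k ↔ T ∈ containsMatching S k := by
  rw [prod_X_mem_sqfreeIdeal_pow_iff]
  constructor
  · rintro ⟨H, hHS, hHT, hdisj⟩
    have hinj : Function.Injective H := fun i j heq => by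
      by_contra hij
      have hself : Disjoint (H i) (H j) := hdisj hij
      rw [← heq, disjoint_self] at hself
      exact (hS (H i) (hHS i)).ne_empty hself
    refine ⟨Finset.univ.map ⟨H, hinj⟩, isMatchingOf_iff_pairwiseDisjoint.2 ⟨?_, ?_⟩, ?_, ?_⟩
    · simpa [Finset.map_eq_image, Finset.image_subset_iff] using hHS
    · rw [Finset.coe_map, Finset.coe_univ, Set.image_univ]
      exact hdisj.range_pairwise
    · rw [Finset.card_map, Finset.card_univ, Fintype.card_fin]
    · simpa using hHT
  · rintro ⟨M, hM, hkM, hMT⟩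
    obtain ⟨hMS, hdisj⟩ := isMatchingOf_iff_pairwiseDisjoint.1 hM
    obtain ⟨e⟩ : Nonempty (Fin k ↪ M) := Function.Embedding.nonempty_of_card_le (by simpa)
    exact ⟨fun i => e i, fun i => hMS (e i).2, fun i => hMT _ (e i).2,
      fun i j hij => hdisj (e i).2 (e j).2 fun heq => hij (e.injective (Subtype.ext heq))⟩

theorem sqfreePow_facetIdealOf (K : Type) [Field K] {S : Finset (Finset α)}
    (hS : ∀ F ∈ S, F.Nonempty) (k : ℕ) :
    sqfreePow K (facetIdealOf K S) k = sqfreeIdeal K (containsMatching S k) := by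
  have hfacet : facetIdealOf K S = sqfreeIdeal K (S : Set (Finset α)) := by
    rw [facetIdealOf, sqfreeIdeal]
    congr 1
    ext p
    simp only [xMon, Set.mem_ofPred_eq, Set.mem_image, Finset.mem_coe, eq_comm]
  rw [sqfreePow, sqfreeIdeal, hfacet]
  congr 1
  ext p
  constructor
  · rintro ⟨⟨T, rfl⟩, hT⟩
    exact ⟨T, (prod_X_mem_sqfreeIdeal_pow_iff_containsMatching hS).1 hT, rfl⟩
  · rintro ⟨T, hT, rfl⟩
    exact ⟨⟨T, rfl⟩, (prod_X_mem_sqfreeIdeal_pow_iff_containsMatching hS).2 hT⟩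

end SquarefreePowers

section Grafted

variable {α : Type} [DecidableEq α]

theorem IsLeafOf.exists_free_vertex {S : Finset (Finset α)} {F : Finset α} (h : IsLeafOf S F)
    (hF : F.Nonempty) (hanti : ∀ G ∈ S, F ⊆ G → F = G) :
    ∃ v ∈ F, ∀ H ∈ S, v ∈ H → H = F := by
  obtain ⟨-, hall | ⟨G, hG, hGF, hjoint⟩⟩ := h
  · obtain ⟨v, hv⟩ := hF
    exact ⟨v, hv, fun H hH _ => hall H hH⟩
  · obtain ⟨v, hv, hvG⟩ := Finset.not_subset.1 fun hsub => hGF (hanti G hG hsub).symm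
    refine ⟨v, hv, fun H hH hvH => ?_⟩
    by_contra hHF
    exact hvG (Finset.mem_inter.1 (hjoint H hH hHF (Finset.mem_inter.2 ⟨hv, hvH⟩))).2

theorem IsGrafted.isLeafOf_of_free_vertex {S : Finset (Finset α)} {F : Finset α} {v : α}
    (h : IsGrafted S) (hF : F ∈ S) (hvF : v ∈ F) (hfree : ∀ H ∈ S, v ∈ H → H = F) :
    IsLeafOf S F := by
  obtain ⟨_, Fs, Gs, rfl, -, hcover, hleaves, -, -⟩ := h
  rw [hleaves]
  refine (Finset.mem_union.1 hF).elim id fun hFGs => ?_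
  obtain ⟨L, hL, hvL⟩ := hcover F hFGs v hvF
  exact hfree L (Finset.mem_union_left Gs hL) hvL ▸ hL

theorem IsGrafted.inter_subset_or_of_free_vertex {S : Finset (Finset α)} {F : Finset α} {v : α}
    (h : IsGrafted S) (hF : F ∈ S) (hvF : v ∈ F) (hfree : ∀ H ∈ S, v ∈ H → H = F) {G G' : Finset α}
    (hG : G ∈ S) (hG' : G' ∈ S) : G ∩ F ⊆ G' ∨ G' ∩ F ⊆ G := by
  induction h with
  | intro S Fs Gs hunion hdisj hcover hleaves hFdisj hrec ih =>
  obtain rfl | hGF := eq_or_ne G F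
  · exact .inr Finset.inter_subset_right
  obtain rfl | hGF' := eq_or_ne G' F
  · exact .inl Finset.inter_subset_right
  have hleaf : IsLeafOf S F := (IsGrafted.intro S Fs Gs hunion hdisj hcover hleaves hFdisj
    hrec).isLeafOf_of_free_vertex hF hvF hfree
  obtain ⟨J, hJ, hJF, hjoint⟩ := hleaf.exists_joint ⟨G, hG, F, hF, hGF⟩
  obtain hJFs | hJGs := Finset.mem_union.1 (hunion ▸ hJ)
  · have hFJ : F ∩ J = ∅ := hFdisj F ((hleaves F).1 hleaf) J hJFs hJF.symm
    have hFG : F ∩ G ⊆ F ∩ J := Finset.subset_inter Finset.inter_subset_left (hjoint G hG hGF)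
    rw [hFJ, Finset.inter_comm] at hFG
    exact .inl (hFG.trans (Finset.empty_subset G'))
  obtain rfl | hJG := eq_or_ne J G
  · exact .inr (Finset.inter_comm G' F ▸ hjoint G' hG' hGF')
  obtain rfl | hJG' := eq_or_ne J G'
  · exact .inl (Finset.inter_comm G F ▸ hjoint G hG hGF)
  exact ih J hJGs (Finset.mem_erase.2 ⟨hJF.symm, hF⟩)
    (fun H hH => hfree H (Finset.mem_of_mem_erase hH)) (Finset.mem_erase.2 ⟨hJG.symm, hG⟩)
    (Finset.mem_erase.2 ⟨hJG'.symm, hG'⟩)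

theorem IsCMForestFacets.exists_isBlockSystem {S : Finset (Finset α)} (h : IsCMForestFacets S)
    (hS : ∀ F ∈ S, F.Nonempty) (hanti : ∀ F ∈ S, ∀ G ∈ S, F ⊆ G → F = G) :
    ∃ A, IsBlockSystem A S := by
  obtain ⟨hleafProp, hgraft⟩ := h
  obtain ⟨_, Fs, Gs, rfl, -, hcover, hleaves, hFdisj, -⟩ := id hgraft
  refine ⟨Fs, fun F hF F' hF' hne => Finset.disjoint_iff_inter_eq_empty.2 (hFdisj F hF F' hF' hne),
    hS, fun H hH v hv => ?_, fun F hF G hG G' hG' => ?_,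
    fun F hF => ⟨F, Finset.mem_union_left Gs hF, subset_rfl⟩, hleafProp⟩
  · exact (Finset.mem_union.1 hH).elim (fun hHFs => ⟨H, hHFs, hv⟩) fun hHGs => hcover H hHGs v hv
  · have hleaf : IsLeafOf (Fs ∪ Gs) F := (hleaves F).2 hF
    obtain ⟨v, hvF, hfree⟩ := hleaf.exists_free_vertex (hS F hleaf.1) (hanti F hleaf.1)
    exact hgraft.inter_subset_or_of_free_vertex hleaf.1 hvF hfree hG hG'

end Grafted

section Depth

variable {α : Type} [DecidableEq α]

namespace IsBlockSystem

variable {A S : Finset (Finset α)}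

theorem exists_isMatchingOf (h : IsBlockSystem A S) {M : Finset (Finset α)} (hM : M ⊆ A) :
    ∃ N, IsMatchingOf S N ∧ N.card = M.card ∧ ∀ H ∈ N, ∃ B ∈ M, H ⊆ B := by
  choose! f hfS hf using h.exists_subset
  have hdisj (B) (hB : B ∈ M) (B') (hB' : B' ∈ M) (hne : B ≠ B') : Disjoint (f B) (f B') :=
    (h.pairwiseDisjoint (hM hB) (hM hB') hne).mono (hf B (hM hB)) (hf B' (hM hB'))
  have hinj : Set.InjOn f M := fun B hB B' hB' heq => by
    by_contra hne
    have hself : Disjoint (f B) (f B) := heq ▸ hdisj B hB B' hB' hne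
    exact (h.nonempty _ (hfS B (hM hB))).ne_empty (disjoint_self.1 hself)
  refine ⟨M.image f, ⟨Finset.image_subset_iff.2 fun B hB => hfS B (hM hB), ?_⟩,
    Finset.card_image_of_injOn hinj, ?_⟩
  · simp only [Finset.forall_mem_image, ← Finset.disjoint_iff_inter_eq_empty]
    exact fun B hB B' hB' hne => hdisj B hB B' hB' fun heq => hne (congrArg f heq)
  · exact Finset.forall_mem_image.2 fun B hB => ⟨B, hB, hf B (hM hB)⟩

theorem matchingNumberOf_eq (h : IsBlockSystem A S) : matchingNumberOf S = A.card := by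
  refine IsGreatest.csSup_eq ⟨?_, ?_⟩
  · obtain ⟨N, hN, hcard, -⟩ := h.exists_isMatchingOf subset_rfl
    exact ⟨N, hN, hcard⟩
  · rintro _ ⟨M, hM, rfl⟩
    exact h.card_le_of_isMatchingOf hM

theorem card_filter_not_disjoint_le (h : IsBlockSystem A S) (W : Finset α) :
    (A.filter (¬ Disjoint · W)).card ≤ W.card := by
  refine Finset.card_le_card_of_forall_subsingleton (fun B v => v ∈ B) (fun B hB => ?_)
    fun v _ B hB B' hB' => ?_
  · obtain ⟨v, hvB, hvW⟩ := Finset.not_disjoint_iff.1 (Finset.mem_filter.1 hB).2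
    exact ⟨v, hvW, hvB⟩
  · exact h.pairwiseDisjoint.elim_finset (Finset.mem_filter.1 hB.1).1 (Finset.mem_filter.1 hB'.1).1
      v hB.2 hB'.2

theorem card_lt_of_containsMatching_subset_meeting (h : IsBlockSystem A S) {W : Finset α} {k : ℕ}
    (hW : containsMatching S k ⊆ meeting W) : A.card < W.card + k := by
  have hlt : (A.filter (Disjoint · W)).card < k := by
    by_contra! hle
    obtain ⟨N, hN, hcard, hNA⟩ := h.exists_isMatchingOf (Finset.filter_subset (Disjoint · W) A)
    refine hW (show N.biUnion id ∈ containsMatching S k from ⟨N, hN, hle.trans hcard.ge,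
      fun H hH => Finset.subset_biUnion_of_mem id hH⟩)
      ((Finset.disjoint_biUnion_right _ _ _).2 fun H hH => ?_)
    obtain ⟨B, hB, hHB⟩ := hNA H hH
    exact ((Finset.mem_filter.1 hB).2.mono_left hHB).symm
  have hle := h.card_filter_not_disjoint_le W
  have hsum := Finset.card_filter_add_card_filter_not (s := A) (Disjoint · W)
  omega

variable [Fintype α]

theorem card_le_card_univ (h : IsBlockSystem A S) : A.card ≤ Fintype.card α := by
  have hlt : A.card < (Finset.univ : Finset α).card + 1 :=
    h.card_lt_of_containsMatching_subset_meeting fun T hT hdisj => by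
      rw [show T = ∅ from top_disjoint.1 hdisj] at hT
      exact empty_notMem_containsMatching h.nonempty le_rfl hT
  exact Nat.lt_succ_iff.1 hlt

theorem gradedDepth_eq (h : IsBlockSystem A S) (K : Type) [Field K] {k : ℕ} (hk : 1 ≤ k)
    (hkA : k ≤ A.card) : gradedDepth K (sqfreeIdeal K (containsMatching S k)) =
      Fintype.card α - A.card + k - 1 := by
  have hA : A.card ≤ Fintype.card α := h.card_le_card_univ
  have hempty : containsMatching S k ∪ meeting ∅ = containsMatching S k := by
    simp [meeting]
  refine IsGreatest.csSup_eq ⟨⟨esymmSeq α K (Fintype.card α - A.card + k - 1),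
    length_esymmSeq _, mem_idealOfVars_of_mem_esymmSeq, ?_⟩, ?_⟩
  · have hreg := h.isWeaklyRegular_esymmSeq (R := K) (W := ∅)
      (fun B _ => Finset.disjoint_empty_left B) (k := k)
      (d := Fintype.card α - A.card + k - 1) (by omega) (by rw [Finset.card_empty]; omega)
    rw [hempty] at hreg
    exact isRegular_quotient_of_le hreg (idealOfVars_ne_top α K)
      (sqfreeIdeal_le_idealOfVars (empty_notMem_containsMatching h.nonempty hk))
      mem_idealOfVars_of_mem_esymmSeq
  · rintro _ ⟨rs, rfl, -, hreg⟩
    have hdim : ringKrullDim (MvPolynomial α K ⧸ sqfreeIdeal K (containsMatching S k)) ≤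
        ringKrullDim K + (Fintype.card α - A.card + k - 1 : ℕ) :=
      ringKrullDim_quotient_sqfreeIdeal_le fun W hW => by
        have hlt := h.card_lt_of_containsMatching_subset_meeting hW
        rw [Finset.card_compl]
        omega
    have hlen := length_le_supportDim_of_isRegular hreg
    rw [Module.supportDim_quotient_eq_ringKrullDim] at hlen
    rw [ringKrullDim_eq_zero_of_field, zero_add] at hdim
    exact_mod_cast hlen.trans hdim

end IsBlockSystem

end Depth

theorem stmt1 (Δ : SimplicialComplexOn V)
    (hcov : ∀ v : V, ∃ F ∈ Δ.facets, v ∈ F)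
    (hCM : IsCMForestFacets Δ.facets) :
    ∀ k : ℕ, 1 ≤ k → k ≤ matchingNumberOf Δ.facets →
      gradedDepth K (sqfreePow K (facetIdealOf K Δ.facets) k) =
        Fintype.card V - matchingNumberOf Δ.facets + k - 1 := by
  intro k hk hkν
  obtain ⟨A, hA⟩ := hCM.exists_isBlockSystem Δ.nonempty_facet Δ.antichain
  rw [hA.matchingNumberOf_eq] at hkν ⊢
  rw [sqfreePow_facetIdealOf K Δ.nonempty_facet]
  exact hA.gradedDepth_eq K hk hkν

end Statements
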